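/- arXiv:2202.03279 — 4 statements merged into one kernel-verified Lean document; each statement's English description precedes it below -/
import Mathlib

section
/- Let N ≥ 1, m > k ≥ 1, n ≥ 1 and h₁,…,h_n > 0. Let p₀,…,p_{N−1} be a basis of the polynomials of degree ≤ N−1 on [0,1], p̄₀ = 1 and p̄ᵢ(τ) = ∫₀^τ p_{i−1}(σ)dσ for i = 1,…,N. Let (σᵢ,γᵢ)_{i=1..N} be any quadrature with positive weights exact for degree 2N−2 and (σ̄ᵢ,γ̄ᵢ)_{i=1..N+1} any quadrature with positive weights exact for degree 2N. With V, V̄, V̊, Γ, Γ̄ defined by V_{iα} = p_{α−1}(σᵢ), V̄_{iα} = p̄_{α−1}(σ̄ᵢ), V̊_{iα} = p̄′_{α−1}(σ̄ᵢ), Γ = diag(γᵢ^{1/2}), Γ̄ = diag(γ̄ᵢ^{1/2}), set U_j = blockdiag(I_k ⊗ h_j^{3/2}Γ̄V̄, I_{m−k} ⊗ h_j^{1/2}ΓV), 𝒰 = blockdiag(U₁,…,U_n), and Û_j = blockdiag(I_k ⊗ [h_j^{3/2}Γ̄V̄ stacked above h_j^{1/2}Γ̄V̊], I_{m−k} ⊗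 h_j^{1/2}ΓV), 𝒰̂ = blockdiag(Û₁,…,Û_n). Then the matrices 𝒰ᵀ𝒰 and 𝒰̂ᵀ𝒰̂ are independent of the choice of the quadrature nodes and weights (among rules with the stated exactness and positive weights), and both are symmetric positive definite; in particular all singular values of 𝒰 and 𝒰̂ are positive. -/
open MeasureTheory Matrix Polynomial
open scoped BigOperators

/-- `p̄₀ = 1`, `p̄ᵢ(τ) = ∫₀^τ p_{i-1}(σ) dσ`. -/
noncomputable def pbarEval (p : ℕ → Polynomial ℝ) : ℕ → ℝ → ℝ
  | 0, _ => 1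
  | i + 1, τ => ∫ s in (0:ℝ)..τ, (p i).eval s

/-- A quadrature rule on `[0,1]` with nodes `0 ≤ σ₁ < … < σ_M ≤ 1` and positive weights,
exact for all polynomials of degree `≤ d`. -/
def IsQuad {M : ℕ} (σ γ : Fin M → ℝ) (d : ℕ) : Prop :=
  (∀ i, σ i ∈ Set.Icc (0:ℝ) 1) ∧ StrictMono σ ∧ (∀ i, 0 < γ i) ∧
    ∀ q : Polynomial ℝ, q.natDegree ≤ d →
      ∑ i, γ i * q.eval (σ i) = ∫ s in (0:ℝ)..1, q.eval s

/-- Row/column index type for the block matrix `𝒰`: block `j`, then either a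
"differential" index `(κ, i)` with `i : Fin (N+1)` or an "algebraic" index with `i : Fin N`. -/
abbrev UIdx (N m k n : ℕ) := Fin n × (Fin k × Fin (N + 1) ⊕ Fin (m - k) × Fin N)

/-- Row index type for `𝒰̂`: in each differential block the rows of `h^{3/2}Γ̄V̄`
are stacked above the rows of `h^{1/2}Γ̄V̊`. -/
abbrev UhIdx (N m k n : ℕ) := Fin n × (Fin k × (Fin (N + 1) ⊕ Fin (N + 1)) ⊕ Fin (m - k) × Fin N)

/-- `𝒰 = blockdiag(U₁,…,U_n)`, `U_j = blockdiag(I_k ⊗ h_j^{3/2}Γ̄V̄, I_{m-k} ⊗ h_j^{1/2}ΓV)`. -/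
noncomputable def Umat (N m k n : ℕ) (p : ℕ → Polynomial ℝ) (h : Fin n → ℝ)
    (σ γ : Fin N → ℝ) (σb γb : Fin (N + 1) → ℝ) :
    Matrix (UIdx N m k n) (UIdx N m k n) ℝ :=
  Matrix.of fun x y =>
    match x, y with
    | (j, Sum.inl (κ, i)), (j', Sum.inl (κ', α)) =>
        if j = j' ∧ κ = κ' then
          h j ^ ((3:ℝ)/2) * Real.sqrt (γb i) * pbarEval p (α : ℕ) (σb i) else 0
    | (j, Sum.inr (κ, i)), (j', Sum.inr (κ', α)) =>
        if j = j' ∧ κ = κ' then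
          h j ^ ((1:ℝ)/2) * Real.sqrt (γ i) * (p (α : ℕ)).eval (σ i) else 0
    | _, _ => 0

/-- `𝒰̂ = blockdiag(Û₁,…,Û_n)`, where `Û_j` has the blocks `h_j^{3/2}Γ̄V̄` stacked above
`h_j^{1/2}Γ̄V̊` in the differential part (`V̊_{iα} = p̄'_{α-1}(σ̄ᵢ)`), and
`I_{m-k} ⊗ h_j^{1/2}ΓV` in the algebraic part. -/
noncomputable def Uhmat (N m k n : ℕ) (p : ℕ → Polynomial ℝ) (h : Fin n → ℝ)
    (σ γ : Fin N → ℝ) (σb γb : Fin (N + 1) → ℝ) :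
    Matrix (UhIdx N m k n) (UIdx N m k n) ℝ :=
  Matrix.of fun x y =>
    match x, y with
    | (j, Sum.inl (κ, Sum.inl i)), (j', Sum.inl (κ', α)) =>
        if j = j' ∧ κ = κ' then
          h j ^ ((3:ℝ)/2) * Real.sqrt (γb i) * pbarEval p (α : ℕ) (σb i) else 0
    | (j, Sum.inl (κ, Sum.inr i)), (j', Sum.inl (κ', α)) =>
        if j = j' ∧ κ = κ' then
          h j ^ ((1:ℝ)/2) * Real.sqrt (γb i) * deriv (pbarEval p (α : ℕ)) (σb i) else 0
    | (j, Sum.inr (κ, i)), (j', Sum.inr (κ', α)) =>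
        if j = j' ∧ κ = κ' then
          h j ^ ((1:ℝ)/2) * Real.sqrt (γ i) * (p (α : ℕ)).eval (σ i) else 0
    | _, _ => 0

/-- `s` is a singular value of `A`: `s ≥ 0` and `s²` is an eigenvalue of `AᵀA`. -/
def IsSingVal {I J : Type} [Fintype I] [Fintype J] (A : Matrix I J ℝ) (s : ℝ) : Prop :=
  0 ≤ s ∧ ∃ v : J → ℝ, v ≠ 0 ∧ (Aᵀ * A).mulVec v = s ^ 2 • v

lemma exists_antideriv (q : Polynomial ℝ) : ∃ Q : Polynomial ℝ, derivative Q = q ∧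
    Q.eval 0 = 0 ∧ Q.natDegree ≤ q.natDegree + 1 := by
  refine ⟨∑ i ∈ Finset.range (q.natDegree + 1), monomial (i + 1) (q.coeff i / ((i : ℝ) + 1)),
    ?_, ?_, ?_⟩
  · conv_rhs => rw [q.as_sum_range]
    rw [derivative_sum]
    refine Finset.sum_congr rfl fun i _ => ?_
    rw [derivative_monomial]
    have : (i : ℝ) + 1 ≠ 0 := by positivity
    simp [div_mul_cancel₀ _ this]
  · simp [eval_finsetSum]
  · refine natDegree_sum_le_of_forall_le _ _ fun i hi => ?_
    have := Finset.mem_range.1 hi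
    exact (natDegree_monomial_le _).trans (by omega)

lemma exists_pbar (p : ℕ → Polynomial ℝ) : ∃ P : ℕ → Polynomial ℝ,
    (∀ a, pbarEval p a = fun t => (P a).eval t) ∧ P 0 = 1 ∧
    (∀ i, derivative (P (i + 1)) = p i) ∧ (∀ i, (P (i + 1)).eval 0 = 0) ∧
    (∀ i, (P (i + 1)).natDegree ≤ (p i).natDegree + 1) := by
  choose Q h1 h2 h3 using fun i => exists_antideriv (p i)
  have hQ : ∀ i, pbarEval p (i + 1) = fun t => (Q i).eval t := by
    intro i
    funext t
    have hi : ∫ s in (0:ℝ)..t, (p i).eval s = (Q i).eval t - (Q i).eval 0 := by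
      refine intervalIntegral.integral_eq_sub_of_hasDerivAt (f := fun t => (Q i).eval t) ?_ ?_
      · intro x _
        have := (Q i).hasDerivAt x
        rwa [h1] at this
      · exact (p i).continuous.intervalIntegrable _ _
    rw [pbarEval, hi, h2, sub_zero]
  obtain ⟨P, hP0, hPs⟩ : ∃ P : ℕ → Polynomial ℝ, P 0 = 1 ∧ ∀ i, P (i + 1) = Q i :=
    ⟨fun a => match a with
      | 0 => 1
      | i + 1 => Q i, rfl, fun _ => rfl⟩
  refine ⟨P, ?_, hP0, ?_, ?_, ?_⟩
  · rintro (_ | i)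
    · funext t
      rw [hP0, pbarEval, eval_one]
    · rw [hQ, hPs]
  · intro i; rw [hPs, h1]
  · intro i; rw [hPs, h2]
  · intro i; rw [hPs]; exact h3 i

lemma quad_gram {M d : ℕ} {σ γ σ' γ' : Fin M → ℝ} (hq : IsQuad σ γ d) (hq' : IsQuad σ' γ' d)
    (c : ℝ) (f g : Polynomial ℝ) (hd : f.natDegree + g.natDegree ≤ d) :
    ∑ i, (c * Real.sqrt (γ i) * f.eval (σ i)) * (c * Real.sqrt (γ i) * g.eval (σ i)) =
    ∑ i, (c * Real.sqrt (γ' i) * f.eval (σ' i)) * (c * Real.sqrt (γ' i) * g.eval (σ' i)) := by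
  have key : ∀ {σ γ : Fin M → ℝ}, IsQuad σ γ d →
      ∑ i, (c * Real.sqrt (γ i) * f.eval (σ i)) * (c * Real.sqrt (γ i) * g.eval (σ i)) =
      c ^ 2 * ∫ s in (0:ℝ)..1, (f * g).eval s := by
    intro σ γ hq
    rw [← hq.2.2.2 (f * g) (natDegree_mul_le.trans hd), Finset.mul_sum]
    refine Finset.sum_congr rfl fun i _ => ?_
    have := Real.mul_self_sqrt (hq.2.2.1 i).le
    rw [eval_mul]
    linear_combination (c ^ 2 * f.eval (σ i) * g.eval (σ i)) * this
  rw [key hq, key hq']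

lemma block_inj {M d : ℕ} {σ γ : Fin M → ℝ} (hq : IsQuad σ γ d) (c : ℝ) (hc : 0 < c)
    (P : ℕ → Polynomial ℝ) (hP : LinearIndependent ℝ fun i : Fin M => P i)
    (hd : ∀ i < M, (P i).natDegree ≤ M - 1) (w : Fin M → ℝ)
    (hw : ∀ i, ∑ a : Fin M, c * Real.sqrt (γ i) * (P a).eval (σ i) * w a = 0) : w = 0 := by
  have h0 : ∑ a : Fin M, w a • P a = 0 := by
    rcases Nat.eq_zero_or_pos M with rfl | hM
    · simp
    refine eq_zero_of_natDegree_lt_card_of_eval_eq_zero _ hq.2.1.injective (fun i => ?_) ?_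
    · have h1 : c * Real.sqrt (γ i) ≠ 0 :=
        (mul_pos hc (Real.sqrt_pos.2 (hq.2.2.1 i))).ne'
      apply mul_left_cancel₀ h1
      rw [mul_zero, ← hw i, eval_finsetSum, Finset.mul_sum]
      refine Finset.sum_congr rfl fun a _ => ?_
      simp only [eval_smul, smul_eq_mul]; ring
    · rw [Fintype.card_fin]
      refine lt_of_le_of_lt (natDegree_sum_le_of_forall_le (n := M - 1) _ _ fun a _ => ?_) (by omega)
      exact (natDegree_smul_le _ _).trans (hd a a.2)
  funext a
  exact Fintype.linearIndependent_iff.1 hP w h0 a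

lemma pbar_li {N : ℕ} {p P : ℕ → Polynomial ℝ} (hli : LinearIndependent ℝ fun i : Fin N => p i)
    (h0 : P 0 = 1) (h1 : ∀ i, derivative (P (i + 1)) = p i) (h2 : ∀ i, (P (i + 1)).eval 0 = 0) :
    LinearIndependent ℝ fun i : Fin (N + 1) => P i := by
  rw [Fintype.linearIndependent_iff] at hli ⊢
  intro g hg
  rw [Fin.sum_univ_succ] at hg
  have e := congrArg (eval 0) hg
  have d := congrArg derivative hg
  simp [h0, eval_finsetSum, h2] at e
  simp [h0, h1] at d
  intro i
  refine Fin.cases e (fun i => hli (fun i => g i.succ) ?_ i) i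
  exact d

lemma posdef_sing {I J : Type} [Fintype I] [Fintype J] (A : Matrix I J ℝ)
    (hA : ∀ v, A.mulVec v = 0 → v = 0) :
    (Aᵀ * A).PosDef ∧ ∀ s, IsSingVal A s → 0 < s := by
  constructor
  · have := Matrix.PosDef.conjTranspose_mul_self A (by
      intro x y hxy
      have := hA (x - y) (by rw [Matrix.mulVec_sub]; exact sub_eq_zero.2 hxy)
      exact sub_eq_zero.1 this)
    simpa [Matrix.conjTranspose_eq_transpose_of_trivial] using this
  · rintro s ⟨hs, v, hv, he⟩
    refine lt_of_le_of_ne hs ?_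
    rintro rfl
    apply hv
    apply hA
    have : (Aᴴ * A).mulVec v = 0 := by
      rw [Matrix.conjTranspose_eq_transpose_of_trivial, he]; simp
    exact (Matrix.conjTranspose_mul_self_mulVec_eq_zero A v).1 this

set_option maxHeartbeats 2000000 in
theorem stmt1 (N m k n : ℕ) (hN : 1 ≤ N) (hk : 1 ≤ k) (hkm : k < m) (hn : 1 ≤ n)
    (h : Fin n → ℝ) (hh : ∀ j, 0 < h j)
    (p : ℕ → Polynomial ℝ)
    (hdeg : ∀ i < N, (p i).natDegree ≤ N - 1)
    (hli : LinearIndependent ℝ fun i : Fin N => p i)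
    (σ γ σ' γ' : Fin N → ℝ) (σb γb σb' γb' : Fin (N + 1) → ℝ)
    (hq : IsQuad σ γ (2 * N - 2)) (hq' : IsQuad σ' γ' (2 * N - 2))
    (hqb : IsQuad σb γb (2 * N)) (hqb' : IsQuad σb' γb' (2 * N)) :
    ((Umat N m k n p h σ γ σb γb)ᵀ * Umat N m k n p h σ γ σb γb
        = (Umat N m k n p h σ' γ' σb' γb')ᵀ * Umat N m k n p h σ' γ' σb' γb') ∧
    ((Uhmat N m k n p h σ γ σb γb)ᵀ * Uhmat N m k n p h σ γ σb γb
        = (Uhmat N m k n p h σ' γ' σb' γb')ᵀ * Uhmat N m k n p h σ' γ' σb' γb') ∧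
    ((Umat N m k n p h σ γ σb γb)ᵀ * Umat N m k n p h σ γ σb γb).PosDef ∧
    ((Uhmat N m k n p h σ γ σb γb)ᵀ * Uhmat N m k n p h σ γ σb γb).PosDef ∧
    (∀ s, IsSingVal (Umat N m k n p h σ γ σb γb) s → 0 < s) ∧
    (∀ s, IsSingVal (Uhmat N m k n p h σ γ σb γb) s → 0 < s) := by
  obtain ⟨P, hP, hP0, hP1, hP2, hP3⟩ := exists_pbar p
  have hPd : ∀ i < N + 1, (P i).natDegree ≤ N + 1 - 1 := by
    rintro (_ | i) hi
    · simp [hP0]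
    · have := hP3 i
      have := hdeg i (by omega)
      omega
  have hPli := pbar_li hli hP0 hP1 hP2
  have hder : ∀ a, deriv (pbarEval p a) = fun t => (derivative (P a)).eval t := by
    intro a; rw [hP]; funext t; simp
  have hPd' : ∀ i < N + 1, (derivative (P i)).natDegree ≤ N := fun i hi =>
    (natDegree_derivative_le _).trans (by have := hPd i hi; omega)
  have g1 : ∀ (c : ℝ) (a b : Fin (N + 1)), _ := fun c a b =>
    quad_gram hqb hqb' c (P a) (P b) (by have := hPd a a.2; have := hPd b b.2; omega)
  have g2 : ∀ (c : ℝ) (a b : Fin (N + 1)), _ := fun c a b =>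
    quad_gram hqb hqb' c (derivative (P a)) (derivative (P b))
      (by have := hPd' a a.2; have := hPd' b b.2; omega)
  have g3 : ∀ (c : ℝ) (a b : Fin N), _ := fun c a b =>
    quad_gram hq hq' c (p a) (p b) (by have := hdeg a a.2; have := hdeg b b.2; omega)
  have iU : ∀ v, (Umat N m k n p h σ γ σb γb).mulVec v = 0 → v = 0 := by
    intro v hv
    funext ⟨j, x⟩
    rcases x with ⟨κ, a⟩ | ⟨κ, a⟩
    · refine congrFun (block_inj hqb (h j ^ ((3:ℝ)/2)) (Real.rpow_pos_of_pos (hh j) _) P hPli hPd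
        (fun a => v (j, Sum.inl (κ, a))) fun i => ?_) a
      have := congrFun hv (j, Sum.inl (κ, i))
      simpa [Matrix.mulVec, dotProduct, Umat, Fintype.sum_prod_type, Fintype.sum_sum_type, hP,
        ite_and, ite_mul, Finset.sum_ite_irrel] using this
    · refine congrFun (block_inj hq (h j ^ ((1:ℝ)/2)) (Real.rpow_pos_of_pos (hh j) _) p hli hdeg
        (fun a => v (j, Sum.inr (κ, a))) fun i => ?_) a
      have := congrFun hv (j, Sum.inr (κ, i))
      simpa [Matrix.mulVec, dotProduct, Umat, Fintype.sum_prod_type, Fintype.sum_sum_type, hP,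
        ite_and, ite_mul, Finset.sum_ite_irrel] using this
  have iUh : ∀ v, (Uhmat N m k n p h σ γ σb γb).mulVec v = 0 → v = 0 := by
    intro v hv
    apply iU
    funext ⟨j, x⟩
    rcases x with ⟨κ, a⟩ | ⟨κ, a⟩
    · have := congrFun hv (j, Sum.inl (κ, Sum.inl a))
      simpa [Matrix.mulVec, dotProduct, Umat, Uhmat, Fintype.sum_prod_type,
        Fintype.sum_sum_type] using this
    · have := congrFun hv (j, Sum.inr (κ, a))
      simpa [Matrix.mulVec, dotProduct, Umat, Uhmat, Fintype.sum_prod_type,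
        Fintype.sum_sum_type] using this
  obtain ⟨pU, sU⟩ := posdef_sing _ iU
  obtain ⟨pUh, sUh⟩ := posdef_sing _ iUh
  refine ⟨?_, ?_, pU, pUh, sU, sUh⟩
  · ext ⟨j, x⟩ ⟨j', y⟩
    rcases x with ⟨κ, a⟩ | ⟨κ, a⟩ <;> rcases y with ⟨κ', b⟩ | ⟨κ', b⟩
    · by_cases hj : j = j'
      · by_cases hκ : κ = κ'
        · subst hj hκ
          simp [Matrix.mul_apply, Umat, Fintype.sum_prod_type, Fintype.sum_sum_type, hP,
        ite_and, Finset.sum_ite_irrel]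
          exact g1 _ a b
        · simp [Matrix.mul_apply, Umat, Fintype.sum_prod_type, Fintype.sum_sum_type, hP,
        ite_and, Finset.sum_ite_irrel, Ne.symm hκ]
      · simp [Matrix.mul_apply, Umat, Fintype.sum_prod_type, Fintype.sum_sum_type, hP,
        ite_and, Finset.sum_ite_irrel, Ne.symm hj]
    · simp [Matrix.mul_apply, Umat, Fintype.sum_prod_type, Fintype.sum_sum_type, hP,
        ite_and, Finset.sum_ite_irrel]
    · simp [Matrix.mul_apply, Umat, Fintype.sum_prod_type, Fintype.sum_sum_type, hP,
        ite_and, Finset.sum_ite_irrel]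
    · by_cases hj : j = j'
      · by_cases hκ : κ = κ'
        · subst hj hκ
          simp [Matrix.mul_apply, Umat, Fintype.sum_prod_type, Fintype.sum_sum_type, hP,
        ite_and, Finset.sum_ite_irrel]
          exact g3 _ a b
        · simp [Matrix.mul_apply, Umat, Fintype.sum_prod_type, Fintype.sum_sum_type, hP,
        ite_and, Finset.sum_ite_irrel, Ne.symm hκ]
      · simp [Matrix.mul_apply, Umat, Fintype.sum_prod_type, Fintype.sum_sum_type, hP,
        ite_and, Finset.sum_ite_irrel, Ne.symm hj]
  · ext ⟨j, x⟩ ⟨j', y⟩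
    rcases x with ⟨κ, a⟩ | ⟨κ, a⟩ <;> rcases y with ⟨κ', b⟩ | ⟨κ', b⟩
    · by_cases hj : j = j'
      · by_cases hκ : κ = κ'
        · subst hj hκ
          simp [Matrix.mul_apply, Uhmat, Fintype.sum_prod_type, Fintype.sum_sum_type, hP, hder, Finset.sum_add_distrib,
        ite_and, Finset.sum_ite_irrel]
          exact congrArg₂ (· + ·) (g1 _ a b) (g2 _ a b)
        · simp [Matrix.mul_apply, Uhmat, Fintype.sum_prod_type, Fintype.sum_sum_type, hP, hder, Finset.sum_add_distrib,
        ite_and, Finset.sum_ite_irrel, Ne.symm hκ]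
      · simp [Matrix.mul_apply, Uhmat, Fintype.sum_prod_type, Fintype.sum_sum_type, hP, hder, Finset.sum_add_distrib,
        ite_and, Finset.sum_ite_irrel, Ne.symm hj]
    · simp [Matrix.mul_apply, Uhmat, Fintype.sum_prod_type, Fintype.sum_sum_type, hP, hder, Finset.sum_add_distrib,
        ite_and, Finset.sum_ite_irrel]
    · simp [Matrix.mul_apply, Uhmat, Fintype.sum_prod_type, Fintype.sum_sum_type, hP, hder, Finset.sum_add_distrib,
        ite_and, Finset.sum_ite_irrel]
    · by_cases hj : j = j'
      · by_cases hκ : κ = κ'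
        · subst hj hκ
          simp [Matrix.mul_apply, Uhmat, Fintype.sum_prod_type, Fintype.sum_sum_type, hP, hder, Finset.sum_add_distrib,
        ite_and, Finset.sum_ite_irrel]
          exact g3 _ a b
        · simp [Matrix.mul_apply, Uhmat, Fintype.sum_prod_type, Fintype.sum_sum_type, hP, hder, Finset.sum_add_distrib,
        ite_and, Finset.sum_ite_irrel, Ne.symm hκ]
      · simp [Matrix.mul_apply, Uhmat, Fintype.sum_prod_type, Fintype.sum_sum_type, hP, hder, Finset.sum_add_distrib,
        ite_and, Finset.sum_ite_irrel, Ne.symm hj]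
end

section
/- Assume the grid is equidistant with stepsize h = h_j for all j, and assume h·σ_max(Γ̄V̄) ≤ σ_min(ΓV), where σ_max, σ_min denote largest and smallest singular values. Then, with ℛ the representation map and the norms ‖·‖_{L²}, ‖·‖_{H¹_{D,π}} as above: (i) sup_{c≠0} ‖ℛc‖_{L²}/|c| = h^{1/2} σ_max(ΓV); (ii) sup_{c≠0} |c|/‖ℛc‖_{L²} = h^{−3/2} σ_min(Γ̄V̄)^{−1}; (iii) h^{1/2} σ_max(ΓV) ≤ sup_{c≠0} ‖ℛc‖_{H¹_{D,π}}/|c| ≤ h^{1/2} (σ_max(ΓV)² + h² σ_max(Γ̄V̄)²)^{1/2}; (iv) h^{−3/2} σ_max(Γ̄V̄)^{−1} ≤ sup_{c≠0} |c|/‖ℛc‖_{H¹_{D,π}} ≤ h^{−3/2} σ_min(Γ̄V̄)^{−1}. -/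
open MeasureTheory Matrix Polynomial
open scoped BigOperators

/-- The differential components (`κ = 1,…,k`) of `x = ℛc` on the subinterval
`[t_{j-1}, t_j)`:  `x_κ(s) = Σ_{l=0}^{N} c_{jκl} · h_j · p̄_l((s - t_{j-1})/h_j)`. -/
noncomputable def xdiff (N m k n : ℕ) (p : ℕ → Polynomial ℝ) (t : ℕ → ℝ)
    (c : UIdx N m k n → ℝ) (j : Fin n) (κ : Fin k) (s : ℝ) : ℝ :=
  ∑ l : Fin (N + 1), c (j, Sum.inl (κ, l)) *
    ((t ((j : ℕ) + 1) - t (j : ℕ)) *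
      pbarEval p (l : ℕ) ((s - t (j : ℕ)) / (t ((j : ℕ) + 1) - t (j : ℕ))))

/-- The algebraic components (`κ = k+1,…,m`) of `x = ℛc` on the subinterval
`[t_{j-1}, t_j)`:  `x_κ(s) = Σ_{l=0}^{N-1} c_{jκl} · p_l((s - t_{j-1})/h_j)`. -/
noncomputable def xalg (N m k n : ℕ) (p : ℕ → Polynomial ℝ) (t : ℕ → ℝ)
    (c : UIdx N m k n → ℝ) (j : Fin n) (κ : Fin (m - k)) (s : ℝ) : ℝ :=
  ∑ l : Fin N, c (j, Sum.inr (κ, l)) *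
    (p (l : ℕ)).eval ((s - t (j : ℕ)) / (t ((j : ℕ) + 1) - t (j : ℕ)))

/-- `‖ℛc‖²_{L²}`. -/
noncomputable def normL2sq (N m k n : ℕ) (p : ℕ → Polynomial ℝ) (t : ℕ → ℝ)
    (c : UIdx N m k n → ℝ) : ℝ :=
  ∑ j : Fin n,
    ((∑ κ : Fin k, ∫ s in t (j : ℕ)..t ((j : ℕ) + 1), (xdiff N m k n p t c j κ s) ^ 2) +
     ∑ κ : Fin (m - k), ∫ s in t (j : ℕ)..t ((j : ℕ) + 1), (xalg N m k n p t c j κ s) ^ 2)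

/-- `‖ℛc‖²_{H¹_{D,π}}` (with piecewise derivatives of the differential components). -/
noncomputable def normH1sq (N m k n : ℕ) (p : ℕ → Polynomial ℝ) (t : ℕ → ℝ)
    (c : UIdx N m k n → ℝ) : ℝ :=
  ∑ j : Fin n,
    ((∑ κ : Fin k, ∫ s in t (j : ℕ)..t ((j : ℕ) + 1),
        ((xdiff N m k n p t c j κ s) ^ 2 + (deriv (xdiff N m k n p t c j κ) s) ^ 2)) +
     ∑ κ : Fin (m - k), ∫ s in t (j : ℕ)..t ((j : ℕ) + 1), (xalg N m k n p t c j κ s) ^ 2)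

/-- `V_{iα} = p_{α-1}(σᵢ)`. -/
noncomputable def Vmat (N : ℕ) (p : ℕ → Polynomial ℝ) (σ : Fin N → ℝ) :
    Matrix (Fin N) (Fin N) ℝ :=
  Matrix.of fun i α => (p (α : ℕ)).eval (σ i)

/-- `V̄_{iα} = p̄_{α-1}(σ̄ᵢ)`. -/
noncomputable def Vbmat (N : ℕ) (p : ℕ → Polynomial ℝ) (σb : Fin (N + 1) → ℝ) :
    Matrix (Fin (N + 1)) (Fin (N + 1)) ℝ :=
  Matrix.of fun i α => pbarEval p (α : ℕ) (σb i)

/-- `Γ = diag(γᵢ^{1/2})`. -/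
noncomputable def Gmat {M : ℕ} (γ : Fin M → ℝ) : Matrix (Fin M) (Fin M) ℝ :=
  Matrix.diagonal fun i => Real.sqrt (γ i)

/-- Euclidean norm of a coefficient vector. -/
noncomputable def enormU {N m k n : ℕ} (c : UIdx N m k n → ℝ) : ℝ :=
  Real.sqrt (∑ i, c i ^ 2)

/-- squared norm of `A v`. -/
noncomputable def qf {I J : Type} [Fintype I] [Fintype J] (A : Matrix I J ℝ) (v : J → ℝ) : ℝ :=
  A.mulVec v ⬝ᵥ A.mulVec v

lemma qf_eq {I J : Type} [Fintype I] [Fintype J] (A : Matrix I J ℝ) (v : J → ℝ) :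
    qf A v = v ⬝ᵥ (Aᵀ * A).mulVec v := by
  unfold qf
  rw [← Matrix.mulVec_mulVec, Matrix.dotProduct_mulVec v, Matrix.vecMul_transpose]

lemma qf_nonneg {I J : Type} [Fintype I] [Fintype J] (A : Matrix I J ℝ) (v : J → ℝ) :
    0 ≤ qf A v := by
  unfold qf dotProduct
  exact Finset.sum_nonneg fun i _ => mul_self_nonneg _

lemma dot_pos {J : Type} [Fintype J] (v : J → ℝ) (hv : v ≠ 0) : 0 < v ⬝ᵥ v := by
  have h0 : 0 ≤ v ⬝ᵥ v := by
    unfold dotProduct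
    exact Finset.sum_nonneg fun i _ => mul_self_nonneg _
  refine lt_of_le_of_ne h0 fun h => hv ?_
  exact dotProduct_self_eq_zero.mp h.symm

lemma qf_sing {I J : Type} [Fintype I] [Fintype J] (A : Matrix I J ℝ) (v : J → ℝ) (s : ℝ)
    (h : (Aᵀ * A).mulVec v = s ^ 2 • v) : qf A v = s ^ 2 * (v ⬝ᵥ v) := by
  rw [qf_eq, h, dotProduct_smul, smul_eq_mul]

lemma eig_nonneg {I J : Type} [Fintype I] [Fintype J] (A : Matrix I J ℝ) (v : J → ℝ) (hv : v ≠ 0)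
    (l : ℝ) (h : (Aᵀ * A).mulVec v = l • v) : IsSingVal A (Real.sqrt l) ∧ 0 ≤ l := by
  have h1 : qf A v = l * (v ⬝ᵥ v) := by rw [qf_eq, h, dotProduct_smul, smul_eq_mul]
  have h2 := qf_nonneg A v
  have h3 := dot_pos v hv
  have hl : 0 ≤ l := by
    rw [h1] at h2
    exact nonneg_of_mul_nonneg_left h2 h3
  exact ⟨⟨Real.sqrt_nonneg _, v, hv, by rw [Real.sq_sqrt hl, h]⟩, hl⟩

lemma herm_psd {J : Type} [Fintype J] [DecidableEq J] (M : Matrix J J ℝ) (hM : M.IsHermitian)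
    (H : ∀ (μ : ℝ) (v : J → ℝ), v ≠ 0 → M.mulVec v = μ • v → 0 ≤ μ) (v : J → ℝ) :
    0 ≤ v ⬝ᵥ M.mulVec v := by
  have : M.PosSemidef := by
    rw [hM.posSemidef_iff_eigenvalues_nonneg]
    intro i
    refine H _ (⇑(hM.eigenvectorBasis i)) ?_ (hM.mulVec_eigenvectorBasis i)
    intro h0
    have := hM.eigenvectorBasis.orthonormal.ne_zero i
    apply this
    ext j
    exact congrFun h0 j
  simpa using this.dotProduct_mulVec_nonneg v

lemma qf_le {I J : Type} [Fintype I] [Fintype J] [DecidableEq J] (A : Matrix I J ℝ) (s : ℝ)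
    (hs : IsGreatest {s | IsSingVal A s} s) (v : J → ℝ) : qf A v ≤ s ^ 2 * (v ⬝ᵥ v) := by
  have hh : (s ^ 2 • (1 : Matrix J J ℝ) - Aᵀ * A).IsHermitian := by
    unfold Matrix.IsHermitian
    simp [Matrix.conjTranspose_eq_transpose_of_trivial, Matrix.transpose_mul]
  have := herm_psd _ hh (fun μ w hw he => by
    rw [Matrix.sub_mulVec, Matrix.smul_mulVec, Matrix.one_mulVec] at he
    have h1 : (Aᵀ * A).mulVec w = (s ^ 2 - μ) • w := by
      rw [sub_smul, ← he]; abel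
    obtain ⟨h2, h3⟩ := eig_nonneg A w hw _ h1
    have h4 := hs.2 h2
    have := Real.sq_sqrt h3
    have h5 := pow_le_pow_left₀ (Real.sqrt_nonneg _) h4 2
    linarith) v
  rw [Matrix.sub_mulVec, Matrix.smul_mulVec, Matrix.one_mulVec, dotProduct_sub, dotProduct_smul,
    smul_eq_mul, ← qf_eq] at this
  linarith

lemma le_qf {I J : Type} [Fintype I] [Fintype J] [DecidableEq J] (A : Matrix I J ℝ) (s : ℝ)
    (hs : IsLeast {s | IsSingVal A s} s) (v : J → ℝ) : s ^ 2 * (v ⬝ᵥ v) ≤ qf A v := by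
  have hh : (Aᵀ * A - s ^ 2 • (1 : Matrix J J ℝ)).IsHermitian := by
    unfold Matrix.IsHermitian
    simp [Matrix.conjTranspose_eq_transpose_of_trivial, Matrix.transpose_mul]
  have := herm_psd _ hh (fun μ w hw he => by
    rw [Matrix.sub_mulVec, Matrix.smul_mulVec, Matrix.one_mulVec] at he
    have h1 : (Aᵀ * A).mulVec w = (s ^ 2 + μ) • w := by
      rw [add_smul, ← he]; abel
    obtain ⟨h2, h3⟩ := eig_nonneg A w hw _ h1
    have h4 := hs.2 h2
    have := Real.sq_sqrt h3
    have h5 := pow_le_pow_left₀ hs.1.1 h4 2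
    linarith) v
  rw [Matrix.sub_mulVec, Matrix.smul_mulVec, Matrix.one_mulVec, dotProduct_sub, dotProduct_smul,
    smul_eq_mul, ← qf_eq] at this
  linarith

/-- polynomial version of `p̄`. -/
noncomputable def pbP (p : ℕ → Polynomial ℝ) : ℕ → Polynomial ℝ
  | 0 => 1
  | i + 1 => ∑ a ∈ Finset.range ((p i).natDegree + 1),
      Polynomial.C ((p i).coeff a / (a + 1)) * Polynomial.X ^ (a + 1)

lemma pbP_deriv (p : ℕ → Polynomial ℝ) (i : ℕ) : derivative (pbP p (i + 1)) = p i := by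
  rw [pbP, Polynomial.derivative_sum]
  conv_rhs => rw [(p i).as_sum_range_C_mul_X_pow]
  refine Finset.sum_congr rfl fun a _ => ?_
  rw [Polynomial.derivative_C_mul_X_pow]
  congr 2
  have : (a : ℝ) + 1 ≠ 0 := by positivity
  push_cast
  field_simp

lemma pbP_deriv0 (p : ℕ → Polynomial ℝ) : derivative (pbP p 0) = 0 := by
  rw [pbP]; simp

lemma pbP_eval (p : ℕ → Polynomial ℝ) (i : ℕ) (τ : ℝ) : (pbP p i).eval τ = pbarEval p i τ := by
  cases i with
  | zero => simp [pbP, pbarEval]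
  | succ i =>
    rw [pbarEval]
    rw [intervalIntegral.integral_eq_sub_of_hasDerivAt (f := fun s => (pbP p (i+1)).eval s)]
    · have : (pbP p (i+1)).eval 0 = 0 := by
        rw [pbP, Polynomial.eval_finsetSum]
        simp
      rw [this, sub_zero]
    · intro x _
      have := (pbP p (i+1)).hasDerivAt x
      rwa [pbP_deriv] at this
    · exact (p i).continuous.intervalIntegrable _ _

lemma pbP_deg (p : ℕ → Polynomial ℝ) (N : ℕ) (hN : 1 ≤ N)
    (hdeg : ∀ i < N, (p i).natDegree ≤ N - 1) (i : ℕ) (hi : i < N + 1) :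
    (pbP p i).natDegree ≤ N := by
  cases i with
  | zero => simp [pbP]
  | succ i =>
    rw [pbP]
    refine Polynomial.natDegree_sum_le_of_forall_le _ _ fun a ha => ?_
    refine (Polynomial.natDegree_C_mul_X_pow_le _ _).trans ?_
    have := hdeg i (by omega)
    have := Finset.mem_range.mp ha
    omega

/-- combination. -/
noncomputable def cmb {M : ℕ} (P : ℕ → Polynomial ℝ) (v : Fin M → ℝ) : Polynomial ℝ :=
  ∑ l : Fin M, Polynomial.C (v l) * P l

lemma cmb_eval {M : ℕ} (P : ℕ → Polynomial ℝ) (v : Fin M → ℝ) (x : ℝ) :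
    (cmb P v).eval x = ∑ l : Fin M, v l * (P l).eval x := by
  simp [cmb, Polynomial.eval_finsetSum]

lemma cmb_deg {M d : ℕ} (P : ℕ → Polynomial ℝ) (v : Fin M → ℝ)
    (h : ∀ i < M, (P i).natDegree ≤ d) : (cmb P v).natDegree ≤ d := by
  refine Polynomial.natDegree_sum_le_of_forall_le _ _ fun a _ => ?_
  exact (Polynomial.natDegree_C_mul_le _ _).trans (h a a.2)

lemma cmb_deriv {N : ℕ} (p : ℕ → Polynomial ℝ) (v : Fin (N + 1) → ℝ) :
    derivative (cmb (pbP p) v) = cmb p (fun l : Fin N => v l.succ) := by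
  unfold cmb
  rw [Polynomial.derivative_sum, Fin.sum_univ_succ]
  simp [pbP_deriv, pbP_deriv0]

lemma qf_cmb {M d : ℕ} (P : ℕ → Polynomial ℝ) (v : Fin M → ℝ) (σ γ : Fin M → ℝ)
    (A : Matrix (Fin M) (Fin M) ℝ) (hA : ∀ i α, A i α = (P (α : ℕ)).eval (σ i))
    (h : ∀ i < M, (P i).natDegree ≤ d) (hq : IsQuad σ γ (2 * d)) :
    ∫ s in (0:ℝ)..1, ((cmb P v).eval s) ^ 2 = qf (Gmat γ * A) v := by
  have h1 := hq.2.2.2 ((cmb P v) ^ 2)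
    ((Polynomial.natDegree_pow_le).trans (Nat.mul_le_mul_left 2 (cmb_deg P v h)))
  simp only [Polynomial.eval_pow] at h1
  rw [← h1]
  unfold qf dotProduct
  refine Finset.sum_congr rfl fun i _ => ?_
  have h2 : (Gmat γ * A).mulVec v i = Real.sqrt (γ i) * (cmb P v).eval (σ i) := by
    rw [cmb_eval, Gmat, Matrix.mulVec, dotProduct, Finset.mul_sum]
    refine Finset.sum_congr rfl fun a _ => ?_
    rw [Matrix.diagonal_mul, hA]; ring
  rw [h2]
  have := Real.mul_self_sqrt (hq.2.2.1 i).le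
  linear_combination (-(cmb P v).eval (σ i) ^ 2) * this

lemma scale_int (q : Polynomial ℝ) (a h : ℝ) (hh : 0 < h) :
    ∫ s in a..(a + h), (q.eval ((s - a) / h)) ^ 2 = h * ∫ s in (0:ℝ)..1, (q.eval s) ^ 2 := by
  have := intervalIntegral.integral_comp_div_sub (a := a) (b := a + h)
    (fun x => (q.eval x) ^ 2) hh.ne' (a / h)
  have e : ∀ s, (s - a) / h = s / h - a / h := fun s => by ring
  simp only [e, this, smul_eq_mul]
  have e1 : a / h - a / h = 0 := sub_self _
  have e2 : (a + h) / h - a / h = 1 := by field_simp; ring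
  rw [e1, e2]

lemma qf_posB (N : ℕ) (hN : 1 ≤ N) (p : ℕ → Polynomial ℝ)
    (hdeg : ∀ i < N, (p i).natDegree ≤ N - 1)
    (hli : LinearIndependent ℝ fun i : Fin N => p i)
    (σb γb : Fin (N + 1) → ℝ) (hqb : IsQuad σb γb (2 * N)) (v : Fin (N + 1) → ℝ)
    (hv : qf (Gmat γb * Vbmat N p σb) v = 0) : v = 0 := by
  have hz : (Gmat γb * Vbmat N p σb).mulVec v = 0 := dotProduct_self_eq_zero.mp hv
  have h1 : cmb (pbP p) v = 0 := by
    refine Polynomial.eq_zero_of_natDegree_lt_card_of_eval_eq_zero _ hqb.2.1.injective (fun i => ?_) ?_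
    · have h2 : (Gmat γb * Vbmat N p σb).mulVec v i
          = Real.sqrt (γb i) * (cmb (pbP p) v).eval (σb i) := by
        rw [cmb_eval, Gmat, Matrix.mulVec, dotProduct, Finset.mul_sum]
        refine Finset.sum_congr rfl fun a _ => ?_
        rw [Matrix.diagonal_mul, pbP_eval, Vbmat, Matrix.of_apply]; ring
      rw [hz] at h2
      have h3 := (Real.sqrt_pos.mpr (hqb.2.2.1 i)).ne'
      simpa [h3] using h2.symm
    · have := cmb_deg (M := N + 1) (pbP p) v (pbP_deg p N hN hdeg)
      rw [Fintype.card_fin]; omega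
  have h2 : cmb p (fun l : Fin N => v l.succ) = 0 := by rw [← cmb_deriv, h1]; simp
  have h3 : ∀ l : Fin N, v l.succ = 0 := by
    refine Fintype.linearIndependent_iff.mp hli (fun l => v l.succ) ?_
    rw [← h2, cmb]
    simp [Polynomial.smul_eq_C_mul]
  have h4 : v 0 = 0 := by
    have := congrArg (Polynomial.eval 0) h1
    rw [cmb_eval, Fin.sum_univ_succ] at this
    simpa [h3, pbP] using this
  ext l
  refine Fin.cases ?_ ?_ l
  · simpa using h4
  · simpa using h3

lemma int_diff (N m k n : ℕ) (hN : 1 ≤ N)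
    (h : ℝ) (hpos : 0 < h) (t : ℕ → ℝ) (hstep : ∀ j < n, t (j + 1) = t j + h)
    (p : ℕ → Polynomial ℝ) (hdeg : ∀ i < N, (p i).natDegree ≤ N - 1)
    (σb γb : Fin (N + 1) → ℝ) (hqb : IsQuad σb γb (2 * N))
    (c : UIdx N m k n → ℝ) (j : Fin n) (κ : Fin k) :
    ∫ s in t (j : ℕ)..t ((j : ℕ) + 1), (xdiff N m k n p t c j κ s) ^ 2 =
      h ^ 3 * qf (Gmat γb * Vbmat N p σb) (fun l => c (j, Sum.inl (κ, l))) := by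
  have e : ∀ s, (xdiff N m k n p t c j κ s) ^ 2 = h ^ 2 *
      ((cmb (pbP p) (fun l => c (j, Sum.inl (κ, l)))).eval ((s - t j) / h)) ^ 2 := fun s => by
    rw [xdiff, hstep j j.2, add_sub_cancel_left, cmb_eval, ← mul_pow, Finset.mul_sum]
    congr 1
    refine Finset.sum_congr rfl fun a _ => ?_
    rw [pbP_eval]; ring
  simp only [e]
  rw [intervalIntegral.integral_const_mul, hstep j j.2, scale_int _ _ _ hpos,
    qf_cmb (pbP p) _ σb γb (Vbmat N p σb) (fun i α => by rw [pbP_eval]; rfl)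
      (pbP_deg p N hN hdeg) hqb]
  ring

lemma int_alg (N m k n : ℕ)
    (h : ℝ) (hpos : 0 < h) (t : ℕ → ℝ) (hstep : ∀ j < n, t (j + 1) = t j + h)
    (p : ℕ → Polynomial ℝ) (hdeg : ∀ i < N, (p i).natDegree ≤ N - 1)
    (σ γ : Fin N → ℝ) (hq : IsQuad σ γ (2 * N - 2))
    (c : UIdx N m k n → ℝ) (j : Fin n) (κ : Fin (m - k)) :
    ∫ s in t (j : ℕ)..t ((j : ℕ) + 1), (xalg N m k n p t c j κ s) ^ 2 =
      h * qf (Gmat γ * Vmat N p σ) (fun l => c (j, Sum.inr (κ, l))) := by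
  have e : ∀ s, (xalg N m k n p t c j κ s) ^ 2 =
      ((cmb p (fun l => c (j, Sum.inr (κ, l)))).eval ((s - t j) / h)) ^ 2 := fun s => by
    rw [xalg, hstep j j.2, add_sub_cancel_left, cmb_eval]
  simp only [e]
  have h2 : 2 * N - 2 = 2 * (N - 1) := by omega
  rw [h2] at hq
  rw [hstep j j.2, scale_int _ _ _ hpos,
    qf_cmb p _ σ γ (Vmat N p σ) (fun i α => rfl) hdeg hq]

lemma deriv_xdiff (N m k n : ℕ)
    (h : ℝ) (hpos : 0 < h) (t : ℕ → ℝ) (hstep : ∀ j < n, t (j + 1) = t j + h)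
    (p : ℕ → Polynomial ℝ)
    (c : UIdx N m k n → ℝ) (j : Fin n) (κ : Fin k) (s : ℝ) :
    deriv (xdiff N m k n p t c j κ) s =
      (cmb p (fun l : Fin N => c (j, Sum.inl (κ, l.succ)))).eval ((s - t j) / h) := by
  have e : xdiff N m k n p t c j κ = fun s => h *
      ((cmb (pbP p) (fun l => c (j, Sum.inl (κ, l)))).eval ((s - t j) / h)) := by
    funext s
    rw [xdiff, hstep j j.2, add_sub_cancel_left, cmb_eval, Finset.mul_sum]
    refine Finset.sum_congr rfl fun a _ => ?_
    rw [pbP_eval]; ring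
  rw [e, ← cmb_deriv (N := N) p (fun l => c (j, Sum.inl (κ, l)))]
  set q := cmb (pbP p) (fun l => c (j, Sum.inl (κ, l)))
  have h1 : HasDerivAt (fun s => (s - t j) / h) (1 / h) s :=
    ((hasDerivAt_id s).sub_const _).div_const h
  have h2 := ((q.hasDerivAt ((s - t j) / h)).comp s h1).const_mul h
  have h3 := h2.deriv
  have h4 : h * (eval ((s - t j) / h) (derivative q) * (1 / h)) =
      eval ((s - t j) / h) (derivative q) := by field_simp
  rw [h4] at h3
  exact h3

lemma int_H1 (N m k n : ℕ) (hN : 1 ≤ N)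
    (h : ℝ) (hpos : 0 < h) (t : ℕ → ℝ) (hstep : ∀ j < n, t (j + 1) = t j + h)
    (p : ℕ → Polynomial ℝ) (hdeg : ∀ i < N, (p i).natDegree ≤ N - 1)
    (σ γ : Fin N → ℝ) (hq : IsQuad σ γ (2 * N - 2))
    (σb γb : Fin (N + 1) → ℝ) (hqb : IsQuad σb γb (2 * N))
    (c : UIdx N m k n → ℝ) (j : Fin n) (κ : Fin k) :
    ∫ s in t (j : ℕ)..t ((j : ℕ) + 1),
        ((xdiff N m k n p t c j κ s) ^ 2 + (deriv (xdiff N m k n p t c j κ) s) ^ 2) =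
      h ^ 3 * qf (Gmat γb * Vbmat N p σb) (fun l => c (j, Sum.inl (κ, l))) +
      h * qf (Gmat γ * Vmat N p σ) (fun l : Fin N => c (j, Sum.inl (κ, l.succ))) := by
  simp only [deriv_xdiff N m k n h hpos t hstep p c j κ]
  rw [intervalIntegral.integral_add, int_diff N m k n hN h hpos t hstep p hdeg σb γb hqb]
  · have h2 : 2 * N - 2 = 2 * (N - 1) := by omega
    rw [h2] at hq
    rw [hstep j j.2, scale_int _ _ _ hpos,
      qf_cmb p _ σ γ (Vmat N p σ) (fun i α => rfl) hdeg hq]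
  · apply Continuous.intervalIntegrable
    apply Continuous.pow
    unfold xdiff
    simp only [← pbP_eval]
    fun_prop
  · apply Continuous.intervalIntegrable
    fun_prop

lemma ratio_le {E F M : ℝ} (hE : 0 < E) (hM : 0 ≤ M) (h : F ≤ M ^ 2 * E) :
    Real.sqrt F / Real.sqrt E ≤ M := by
  rw [div_le_iff₀ (Real.sqrt_pos.mpr hE)]
  rw [show M * Real.sqrt E = Real.sqrt (M ^ 2 * E) by
    rw [Real.sqrt_mul (sq_nonneg M), Real.sqrt_sq hM]]
  exact Real.sqrt_le_sqrt h

lemma le_ratio {E F M : ℝ} (hE : 0 < E) (hM : 0 ≤ M) (h : M ^ 2 * E ≤ F) :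
    M ≤ Real.sqrt F / Real.sqrt E := by
  rw [le_div_iff₀ (Real.sqrt_pos.mpr hE)]
  rw [show M * Real.sqrt E = Real.sqrt (M ^ 2 * E) by
    rw [Real.sqrt_mul (sq_nonneg M), Real.sqrt_sq hM]]
  exact Real.sqrt_le_sqrt h

lemma E_eq {N m k n : ℕ} (c : UIdx N m k n → ℝ) : ∑ i, c i ^ 2 =
    ∑ j : Fin n, ((∑ κ : Fin k, (fun l => c (j, Sum.inl (κ, l))) ⬝ᵥ (fun l => c (j, Sum.inl (κ, l))))
      + ∑ κ : Fin (m - k),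
        (fun l => c (j, Sum.inr (κ, l))) ⬝ᵥ (fun l => c (j, Sum.inr (κ, l)))) := by
  rw [Fintype.sum_prod_type]
  simp only [Fintype.sum_sum_type, Fintype.sum_prod_type, dotProduct, sq]

lemma E_pos {N m k n : ℕ} (c : UIdx N m k n → ℝ) (hc : c ≠ 0) : 0 < ∑ i, c i ^ 2 := by
  have := dot_pos c hc
  simpa [dotProduct, sq] using this

lemma sum_bound {n k l : ℕ} (f g : Fin n → Fin k → ℝ) (f' g' : Fin n → Fin l → ℝ)
    (h1 : ∀ j κ, f j κ ≤ g j κ) (h2 : ∀ j κ, f' j κ ≤ g' j κ) :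
    ∑ j, ((∑ κ, f j κ) + ∑ κ, f' j κ) ≤ ∑ j, ((∑ κ, g j κ) + ∑ κ, g' j κ) :=
  Finset.sum_le_sum fun j _ => add_le_add (Finset.sum_le_sum fun κ _ => h1 j κ)
    (Finset.sum_le_sum fun κ _ => h2 j κ)

lemma mul_E {n k l : ℕ} (r : ℝ) (f : Fin n → Fin k → ℝ) (f' : Fin n → Fin l → ℝ) :
    r * ∑ j, ((∑ κ, f j κ) + ∑ κ, f' j κ) =
      ∑ j, ((∑ κ, r * f j κ) + ∑ κ, r * f' j κ) := by
  simp only [Finset.mul_sum, mul_add]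

lemma qf_zero {I J : Type} [Fintype I] [Fintype J] (A : Matrix I J ℝ) :
    qf A (fun _ => 0) = 0 := by
  have : (fun _ : J => (0:ℝ)) = 0 := rfl
  rw [this]; simp [qf]

theorem stmt5 (N m k n : ℕ) (hN : 1 ≤ N) (hk : 1 ≤ k) (hkm : k < m) (hn : 1 ≤ n)
    (h : ℝ) (hpos : 0 < h) (t : ℕ → ℝ) (hstep : ∀ j < n, t (j + 1) = t j + h)
    (p : ℕ → Polynomial ℝ)
    (hdeg : ∀ i < N, (p i).natDegree ≤ N - 1)
    (hli : LinearIndependent ℝ fun i : Fin N => p i)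
    (σ γ : Fin N → ℝ) (σb γb : Fin (N + 1) → ℝ)
    (hq : IsQuad σ γ (2 * N - 2)) (hqb : IsQuad σb γb (2 * N))
    (smaxV sminV smaxVb sminVb : ℝ)
    (hsmaxV : IsGreatest {s | IsSingVal (Gmat γ * Vmat N p σ) s} smaxV)
    (hsminV : IsLeast {s | IsSingVal (Gmat γ * Vmat N p σ) s} sminV)
    (hsmaxVb : IsGreatest {s | IsSingVal (Gmat γb * Vbmat N p σb) s} smaxVb)
    (hsminVb : IsLeast {s | IsSingVal (Gmat γb * Vbmat N p σb) s} sminVb)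
    (hcond : h * smaxVb ≤ sminV) :
    sSup {r : ℝ | ∃ c : UIdx N m k n → ℝ, c ≠ 0 ∧
        r = Real.sqrt (normL2sq N m k n p t c) / enormU c} = h ^ ((1:ℝ)/2) * smaxV ∧
    sSup {r : ℝ | ∃ c : UIdx N m k n → ℝ, c ≠ 0 ∧
        r = enormU c / Real.sqrt (normL2sq N m k n p t c)} = h ^ (-(3:ℝ)/2) * sminVb⁻¹ ∧
    (h ^ ((1:ℝ)/2) * smaxV ≤
        sSup {r : ℝ | ∃ c : UIdx N m k n → ℝ, c ≠ 0 ∧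
          r = Real.sqrt (normH1sq N m k n p t c) / enormU c} ∧
      sSup {r : ℝ | ∃ c : UIdx N m k n → ℝ, c ≠ 0 ∧
          r = Real.sqrt (normH1sq N m k n p t c) / enormU c}
        ≤ h ^ ((1:ℝ)/2) * Real.sqrt (smaxV ^ 2 + h ^ 2 * smaxVb ^ 2)) ∧
    (h ^ (-(3:ℝ)/2) * smaxVb⁻¹ ≤
        sSup {r : ℝ | ∃ c : UIdx N m k n → ℝ, c ≠ 0 ∧
          r = enormU c / Real.sqrt (normH1sq N m k n p t c)} ∧
      sSup {r : ℝ | ∃ c : UIdx N m k n → ℝ, c ≠ 0 ∧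
          r = enormU c / Real.sqrt (normH1sq N m k n p t c)}
        ≤ h ^ (-(3:ℝ)/2) * sminVb⁻¹) := by
  classical
  set A := Gmat γ * Vmat N p σ with hA
  set B := Gmat γb * Vbmat N p σb with hB
  have a2 : (h ^ ((1:ℝ)/2)) ^ 2 = h := by
    rw [← Real.sqrt_eq_rpow, Real.sq_sqrt hpos.le]
  have a0 : 0 ≤ h ^ ((1:ℝ)/2) := Real.rpow_nonneg hpos.le _
  have b2 : (h ^ (-(3:ℝ)/2)) ^ 2 = (h ^ 3)⁻¹ := by
    rw [← Real.rpow_natCast, ← Real.rpow_mul hpos.le, ← Real.rpow_natCast, ← Real.rpow_neg hpos.le]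
    norm_num
  have b0 : 0 ≤ h ^ (-(3:ℝ)/2) := Real.rpow_nonneg hpos.le _
  have h3 : 0 < h ^ 3 := by positivity
  have xV0 : 0 ≤ smaxV := hsmaxV.1.1
  have iV0 : 0 ≤ sminV := hsminV.1.1
  have xB0 : 0 ≤ smaxVb := hsmaxVb.1.1
  have iB0 : 0 < sminVb := by
    obtain ⟨h0, v, hv, he⟩ := hsminVb.1
    refine lt_of_le_of_ne h0 fun hz => hv ?_
    refine qf_posB N hN p hdeg hli σb γb hqb v ?_
    have := qf_sing _ v _ he
    rw [this, ← hz]; ring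
  have iVxV : sminV ≤ smaxV := hsminV.2 hsmaxV.1
  have iBxB : sminVb ≤ smaxVb := hsminVb.2 hsmaxVb.1
  have xBpos : 0 < smaxVb := lt_of_lt_of_le iB0 iBxB
  have cond2 : h ^ 2 * smaxVb ^ 2 ≤ sminV ^ 2 := by
    rw [← mul_pow]
    exact pow_le_pow_left₀ (by positivity) hcond 2
  have iV2 : sminV ^ 2 ≤ smaxV ^ 2 := pow_le_pow_left₀ iV0 iVxV 2
  have iB2 : sminVb ^ 2 ≤ smaxVb ^ 2 := pow_le_pow_left₀ iB0.le iBxB 2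
  have d0 : ∀ {J : Type} [Fintype J] (v : J → ℝ), 0 ≤ v ⬝ᵥ v := fun v => by
    unfold dotProduct
    exact Finset.sum_nonneg fun i _ => mul_self_nonneg _
  have hL : ∀ c : UIdx N m k n → ℝ, normL2sq N m k n p t c =
      ∑ j : Fin n, ((∑ κ : Fin k, h ^ 3 * qf B (fun l => c (j, Sum.inl (κ, l)))) +
        ∑ κ : Fin (m - k), h * qf A (fun l => c (j, Sum.inr (κ, l)))) := fun c => by
    unfold normL2sq
    simp only [int_diff N m k n hN h hpos t hstep p hdeg σb γb hqb c,
      int_alg N m k n h hpos t hstep p hdeg σ γ hq c]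
    rfl
  have hH : ∀ c : UIdx N m k n → ℝ, normH1sq N m k n p t c =
      ∑ j : Fin n, ((∑ κ : Fin k, (h ^ 3 * qf B (fun l => c (j, Sum.inl (κ, l))) +
          h * qf A (fun l : Fin N => c (j, Sum.inl (κ, l.succ))))) +
        ∑ κ : Fin (m - k), h * qf A (fun l => c (j, Sum.inr (κ, l)))) := fun c => by
    unfold normH1sq
    simp only [int_H1 N m k n hN h hpos t hstep p hdeg σ γ hq σb γb hqb c,
      int_alg N m k n h hpos t hstep p hdeg σ γ hq c]
    rfl
  have L_up : ∀ c : UIdx N m k n → ℝ,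
      normL2sq N m k n p t c ≤ h * smaxV ^ 2 * ∑ i, c i ^ 2 := fun c => by
    rw [hL, E_eq, mul_E]
    refine sum_bound _ _ _ _ (fun j κ => ?_) (fun j κ => ?_)
    · set v := (fun l => c (j, Sum.inl (κ, l))) with hv
      have e1 := mul_le_mul_of_nonneg_left (qf_le B _ hsmaxVb v) h3.le
      have e2 := mul_le_mul_of_nonneg_right (cond2.trans iV2) (mul_nonneg hpos.le (d0 v))
      linarith
    · have e1 := mul_le_mul_of_nonneg_left
        (qf_le A _ hsmaxV (fun l => c (j, Sum.inr (κ, l)))) hpos.le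
      linarith
  have L_lo : ∀ c : UIdx N m k n → ℝ,
      h ^ 3 * sminVb ^ 2 * ∑ i, c i ^ 2 ≤ normL2sq N m k n p t c := fun c => by
    rw [hL, E_eq, mul_E]
    refine sum_bound _ _ _ _ (fun j κ => ?_) (fun j κ => ?_)
    · have e1 := mul_le_mul_of_nonneg_left
        (le_qf B _ hsminVb (fun l => c (j, Sum.inl (κ, l)))) h3.le
      linarith
    · set v := (fun l => c (j, Sum.inr (κ, l))) with hv
      have e1 := mul_le_mul_of_nonneg_left (le_qf A _ hsminV v) hpos.le
      have e2 := mul_le_mul_of_nonneg_right cond2 (mul_nonneg hpos.le (d0 v))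
      have e3 := mul_le_mul_of_nonneg_right iB2 (mul_nonneg h3.le (d0 v))
      linarith
  have LH : ∀ c : UIdx N m k n → ℝ, normL2sq N m k n p t c ≤ normH1sq N m k n p t c := fun c => by
    rw [hL, hH]
    refine sum_bound _ _ _ _ (fun j κ => ?_) (fun j κ => le_rfl)
    have := mul_nonneg hpos.le (qf_nonneg A (fun l : Fin N => c (j, Sum.inl (κ, l.succ))))
    linarith
  have H_up : ∀ c : UIdx N m k n → ℝ, normH1sq N m k n p t c ≤
      h * (smaxV ^ 2 + h ^ 2 * smaxVb ^ 2) * ∑ i, c i ^ 2 := fun c => by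
    rw [hH, E_eq, mul_E]
    refine sum_bound _ _ _ _ (fun j κ => ?_) (fun j κ => ?_)
    · have e1 := mul_le_mul_of_nonneg_left
        (qf_le B _ hsmaxVb (fun l => c (j, Sum.inl (κ, l)))) h3.le
      have e2 := mul_le_mul_of_nonneg_left
        (qf_le A _ hsmaxV (fun l : Fin N => c (j, Sum.inl (κ, l.succ)))) hpos.le
      have e3 : (fun l : Fin N => c (j, Sum.inl (κ, l.succ))) ⬝ᵥ
          (fun l : Fin N => c (j, Sum.inl (κ, l.succ))) ≤
          (fun l => c (j, Sum.inl (κ, l))) ⬝ᵥ (fun l => c (j, Sum.inl (κ, l))) := by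
        unfold dotProduct
        rw [Fin.sum_univ_succ (n := N)]
        have := mul_self_nonneg (c (j, Sum.inl (κ, 0)))
        linarith
      have e4 := mul_le_mul_of_nonneg_left e3 (mul_nonneg hpos.le (sq_nonneg smaxV))
      linarith
    · set v := (fun l => c (j, Sum.inr (κ, l))) with hv
      have e1 := mul_le_mul_of_nonneg_left (qf_le A _ hsmaxV v) hpos.le
      have e2 : 0 ≤ h * (h ^ 2 * smaxVb ^ 2) * (v ⬝ᵥ v) :=
        mul_nonneg (by positivity) (d0 v)
      linarith
  have j0 : Fin n := ⟨0, hn⟩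
  have κd : Fin k := ⟨0, hk⟩
  have κa : Fin (m - k) := ⟨0, by omega⟩
  have Lpos : ∀ c : UIdx N m k n → ℝ, c ≠ 0 → 0 < normL2sq N m k n p t c := fun c hc =>
    lt_of_lt_of_le (mul_pos (by positivity) (E_pos c hc)) (L_lo c)
  have Hpos : ∀ c : UIdx N m k n → ℝ, c ≠ 0 → 0 < normH1sq N m k n p t c := fun c hc =>
    lt_of_lt_of_le (Lpos c hc) (LH c)
  -- witnesses
  have wA : ∃ c : UIdx N m k n → ℝ, c ≠ 0 ∧
      h * smaxV ^ 2 * ∑ i, c i ^ 2 ≤ normL2sq N m k n p t c := by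
    obtain ⟨-, v, hv, he⟩ := hsmaxV.1
    refine ⟨fun i => Sum.elim (fun _ => 0) (fun x => v x.2) i.2, fun h0 => hv ?_, ?_⟩
    · ext l
      exact congrFun h0 (j0, Sum.inr (κa, l))
    · rw [hL, E_eq, mul_E]
      refine sum_bound _ _ _ _ (fun j κ => ?_) (fun j κ => ?_)
      · simp [qf_zero, dotProduct]
      · simp only [Sum.elim_inr]
        rw [qf_sing A v _ he]
        exact le_of_eq (by ring)
  have wB : ∃ c : UIdx N m k n → ℝ, c ≠ 0 ∧
      normL2sq N m k n p t c ≤ h ^ 3 * sminVb ^ 2 * ∑ i, c i ^ 2 := by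
    obtain ⟨-, v, hv, he⟩ := hsminVb.1
    refine ⟨fun i => Sum.elim (fun x => v x.2) (fun _ => 0) i.2, fun h0 => hv ?_, ?_⟩
    · ext l
      exact congrFun h0 (j0, Sum.inl (κd, l))
    · rw [hL, E_eq, mul_E]
      refine sum_bound _ _ _ _ (fun j κ => ?_) (fun j κ => ?_)
      · simp only [Sum.elim_inl]
        rw [qf_sing B v _ he]
        exact le_of_eq (by ring)
      · simp [qf_zero, dotProduct]
  have w0 : ∃ c : UIdx N m k n → ℝ, c ≠ 0 ∧
      normH1sq N m k n p t c ≤ h ^ 3 * smaxVb ^ 2 * ∑ i, c i ^ 2 := by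
    refine ⟨fun i => Sum.elim (fun x => if x.2 = 0 then 1 else 0) (fun _ => 0) i.2,
      fun h0 => ?_, ?_⟩
    · have := congrFun h0 (j0, Sum.inl (κd, 0))
      simp at this
    · rw [hH, E_eq, mul_E]
      refine sum_bound _ _ _ _ (fun j κ => ?_) (fun j κ => ?_)
      · simp only [Sum.elim_inl, Fin.succ_ne_zero, if_false, qf_zero]
        have e1 := mul_le_mul_of_nonneg_left
          (qf_le B _ hsmaxVb (fun l => if l = 0 then 1 else 0)) h3.le
        linarith
      · simp [qf_zero, dotProduct]
  obtain ⟨cA, cA0, hcA⟩ := wA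
  obtain ⟨cB, cB0, hcB⟩ := wB
  obtain ⟨c0, c00, hc0⟩ := w0
  have MA : (h ^ ((1:ℝ)/2) * smaxV) ^ 2 = h * smaxV ^ 2 := by rw [mul_pow, a2]
  have MB : (h ^ (-(3:ℝ)/2) * sminVb⁻¹) ^ 2 = (h ^ 3 * sminVb ^ 2)⁻¹ := by
    rw [mul_pow, b2, mul_inv, inv_pow]
  have MC : (h ^ (-(3:ℝ)/2) * smaxVb⁻¹) ^ 2 = (h ^ 3 * smaxVb ^ 2)⁻¹ := by
    rw [mul_pow, b2, mul_inv, inv_pow]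
  have MD : (h ^ ((1:ℝ)/2) * Real.sqrt (smaxV ^ 2 + h ^ 2 * smaxVb ^ 2)) ^ 2 =
      h * (smaxV ^ 2 + h ^ 2 * smaxVb ^ 2) := by
    rw [mul_pow, a2, Real.sq_sqrt (by positivity)]
  have MA0 : 0 ≤ h ^ ((1:ℝ)/2) * smaxV := by positivity
  have MB0 : 0 ≤ h ^ (-(3:ℝ)/2) * sminVb⁻¹ := by positivity
  have MC0 : 0 ≤ h ^ (-(3:ℝ)/2) * smaxVb⁻¹ := by positivity
  have MD0 : 0 ≤ h ^ ((1:ℝ)/2) * Real.sqrt (smaxV ^ 2 + h ^ 2 * smaxVb ^ 2) := by positivity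
  have pB : 0 < h ^ 3 * sminVb ^ 2 := by positivity
  have pC : 0 < h ^ 3 * smaxVb ^ 2 := by positivity
  have U1 : ∀ c : UIdx N m k n → ℝ, c ≠ 0 →
      Real.sqrt (normL2sq N m k n p t c) / enormU c ≤ h ^ ((1:ℝ)/2) * smaxV := fun c hc =>
    ratio_le (E_pos c hc) MA0 (by rw [MA]; exact L_up c)
  have U2 : ∀ c : UIdx N m k n → ℝ, c ≠ 0 →
      enormU c / Real.sqrt (normL2sq N m k n p t c) ≤ h ^ (-(3:ℝ)/2) * sminVb⁻¹ := fun c hc =>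
    ratio_le (Lpos c hc) MB0 (by rw [MB, le_inv_mul_iff₀ pB]; exact L_lo c)
  have U3 : ∀ c : UIdx N m k n → ℝ, c ≠ 0 →
      Real.sqrt (normH1sq N m k n p t c) / enormU c ≤
        h ^ ((1:ℝ)/2) * Real.sqrt (smaxV ^ 2 + h ^ 2 * smaxVb ^ 2) := fun c hc =>
    ratio_le (E_pos c hc) MD0 (by rw [MD]; exact H_up c)
  have U4 : ∀ c : UIdx N m k n → ℝ, c ≠ 0 →
      enormU c / Real.sqrt (normH1sq N m k n p t c) ≤ h ^ (-(3:ℝ)/2) * sminVb⁻¹ := fun c hc =>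
    ratio_le (Hpos c hc) MB0 (by rw [MB, le_inv_mul_iff₀ pB]; exact (L_lo c).trans (LH c))
  have B3 : BddAbove {r : ℝ | ∃ c : UIdx N m k n → ℝ, c ≠ 0 ∧
          r = Real.sqrt (normH1sq N m k n p t c) / enormU c} :=
    ⟨_, by rintro r ⟨c, hc, rfl⟩; exact U3 c hc⟩
  have B4 : BddAbove {r : ℝ | ∃ c : UIdx N m k n → ℝ, c ≠ 0 ∧
          r = enormU c / Real.sqrt (normH1sq N m k n p t c)} :=
    ⟨_, by rintro r ⟨c, hc, rfl⟩; exact U4 c hc⟩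
  refine ⟨IsGreatest.csSup_eq ⟨⟨cA, cA0, ?_⟩, ?_⟩, IsGreatest.csSup_eq ⟨⟨cB, cB0, ?_⟩, ?_⟩,
    ⟨?_, ?_⟩, ⟨?_, ?_⟩⟩
  · exact le_antisymm (le_ratio (E_pos cA cA0) MA0 (by rw [MA]; exact hcA)) (U1 cA cA0)
  · rintro r ⟨c, hc, rfl⟩; exact U1 c hc
  · exact le_antisymm (le_ratio (Lpos cB cB0) MB0
      (by rw [MB, inv_mul_le_iff₀ pB]; exact hcB)) (U2 cB cB0)
  · rintro r ⟨c, hc, rfl⟩; exact U2 c hc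
  · exact le_csSup_of_le B3 ⟨cA, cA0, rfl⟩
      (le_ratio (E_pos cA cA0) MA0 (by rw [MA]; exact hcA.trans (LH cA)))
  · refine csSup_le ⟨_, cA, cA0, rfl⟩ ?_
    rintro r ⟨c, hc, rfl⟩; exact U3 c hc
  · exact le_csSup_of_le B4 ⟨c0, c00, rfl⟩
      (le_ratio (Hpos c0 c00) MC0 (by rw [MC, inv_mul_le_iff₀ pC]; exact hc0))
  · refine csSup_le ⟨_, cA, cA0, rfl⟩ ?_
    rintro r ⟨c, hc, rfl⟩; exact U4 c hc
end

section
/- Let P_i denote the i-th Legendre polynomial and define the modified Legendre basis functions p̄₀(τ) = 1 and p̄_i(τ) = P_i(2τ−1) − (−1)^i for i ≥ 1. Then for all integers α, β ≥ 1: ∫₀¹ p̄₀(ρ)² dρ = 1, ∫₀¹ p̄₀(ρ) p̄_α(ρ) dρ = (−1)^{α+1}, and ∫₀¹ p̄_α(ρ) p̄_β(ρ) dρ = δ_{αβ}/(2α+1) + (−1)^{α+β}, where δ_{αβ} is the Kronecker delta. -/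
open MeasureTheory Polynomial
open scoped BigOperators

/-- The `i`-th Legendre polynomial, via Rodrigues' formula
`P_i(x) = (1/(2^i i!)) (d/dx)^i (x²-1)^i`. -/
noncomputable def legendre (i : ℕ) : Polynomial ℝ :=
  Polynomial.C (1 / (2 ^ i * (Nat.factorial i : ℝ))) *
    Polynomial.derivative^[i] ((Polynomial.X ^ 2 - 1) ^ i)

/-- The modified Legendre basis functions: `p̄₀(τ) = 1` and
`p̄ᵢ(τ) = Pᵢ(2τ-1) - (-1)^i` for `i ≥ 1`. -/
noncomputable def mlp (i : ℕ) (τ : ℝ) : ℝ :=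
  if i = 0 then 1 else (legendre i).eval (2 * τ - 1) - (-1) ^ i

lemma lg_boundary (n j : ℕ) (hj : j < n) (x : ℝ) (hx : x ^ 2 = 1) :
    (derivative^[j] ((X ^ 2 - 1 : ℝ[X]) ^ n)).eval x = 0 := by
  have h := Polynomial.pow_sub_dvd_iterate_derivative_pow (X ^ 2 - 1 : ℝ[X]) n j
  obtain ⟨q, hq⟩ := h
  rw [hq]
  have : n - j ≠ 0 := by omega
  simp [hx, this]

lemma lg_ibp1 (Q R : ℝ[X]) (h1 : R.eval 1 = 0) (h2 : R.eval (-1) = 0) :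
    (∫ x in (-1:ℝ)..1, Q.eval x * (derivative R).eval x)
      = - ∫ x in (-1:ℝ)..1, (derivative Q).eval x * R.eval x := by
  have h := intervalIntegral.integral_mul_deriv_eq_deriv_mul (a := -1) (b := 1)
    (u := fun x => Q.eval x) (v := fun x => R.eval x)
    (u' := fun x => (derivative Q).eval x) (v' := fun x => (derivative R).eval x)
    (fun x _ => Q.hasDerivAt x) (fun x _ => R.hasDerivAt x)
    ((derivative Q).continuous.intervalIntegrable _ _)
    ((derivative R).continuous.intervalIntegrable _ _)
  rw [h, h1, h2]; simp

lemma lg_ibp (n k : ℕ) (hk : k ≤ n) (Q : ℝ[X]) :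
    (∫ x in (-1:ℝ)..1, Q.eval x * (derivative^[k] ((X ^ 2 - 1 : ℝ[X]) ^ n)).eval x)
      = (-1) ^ k * ∫ x in (-1:ℝ)..1, (derivative^[k] Q).eval x * (x ^ 2 - 1) ^ n := by
  induction k generalizing Q with
  | zero => simp
  | succ k ih =>
    rw [Function.iterate_succ_apply', lg_ibp1 _ _ (lg_boundary n k hk 1 (by norm_num))
      (lg_boundary n k hk (-1) (by norm_num)), ih (by omega), Function.iterate_succ_apply]
    ring

lemma lg_int (n : ℕ) : (∫ x in (-1:ℝ)..1, (x ^ 2 - 1) ^ n) * ((2 * n + 1).factorial : ℝ)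
    = (-1) ^ n * 2 ^ (2 * n + 1) * (n.factorial : ℝ) ^ 2 := by
  induction n with
  | zero => norm_num
  | succ n ih =>
    have h := lg_ibp1 X ((X ^ 2 - 1) ^ (n + 1)) (by simp) (by simp)
    have e1 : ∀ x : ℝ, (X : ℝ[X]).eval x * (derivative ((X ^ 2 - 1 : ℝ[X]) ^ (n + 1))).eval x
        = 2 * (n + 1) * ((x ^ 2 - 1) ^ (n + 1) + (x ^ 2 - 1) ^ n) := by
      intro x
      simp [derivative_pow]
      ring
    have e2 : ∀ x : ℝ, (derivative (X : ℝ[X])).eval x * ((X ^ 2 - 1 : ℝ[X]) ^ (n + 1)).eval x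
        = (x ^ 2 - 1) ^ (n + 1) := by
      intro x; simp
    simp only [e1, e2] at h
    rw [intervalIntegral.integral_const_mul, intervalIntegral.integral_add
      (Continuous.intervalIntegrable (by fun_prop) _ _)
      (Continuous.intervalIntegrable (by fun_prop) _ _)] at h
    set I := ∫ x in (-1:ℝ)..1, (x ^ 2 - 1) ^ n
    set J := ∫ x in (-1:ℝ)..1, (x ^ 2 - 1) ^ (n + 1)
    have h' : (2 * n + 3) * J = - (2 * (n + 1)) * I := by linarith
    have f : ((2 * (n + 1) + 1).factorial : ℝ)
        = (2 * n + 3) * ((2 * n + 2) * (2 * n + 1).factorial) := by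
      rw [show 2 * (n + 1) + 1 = (2 * n + 1) + 1 + 1 by ring, Nat.factorial_succ,
        Nat.factorial_succ]
      push_cast; ring
    rw [f, Nat.factorial_succ n]
    push_cast
    linear_combination (2 * n + 2) * ((2 * n + 1).factorial : ℝ) * h'
      - (2 * (n + 1)) * (2 * n + 2) * ih

lemma lg_natDegree (n : ℕ) : ((X ^ 2 - 1 : ℝ[X]) ^ n).natDegree = 2 * n := by
  rw [natDegree_pow, show (X ^ 2 - 1 : ℝ[X]) = X ^ 2 - C 1 by simp, natDegree_X_pow_sub_C]; ring

lemma lg_top (n : ℕ) :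
    derivative^[n] (derivative^[n] ((X ^ 2 - 1 : ℝ[X]) ^ n)) = C ((2 * n).factorial : ℝ) := by
  rw [← Function.iterate_add_apply, ← two_mul]
  have hd : (derivative^[2 * n] ((X ^ 2 - 1 : ℝ[X]) ^ n)).natDegree ≤ 0 := by
    have := natDegree_iterate_derivative ((X ^ 2 - 1 : ℝ[X]) ^ n) (2 * n)
    rw [lg_natDegree] at this; omega
  rw [eq_C_of_natDegree_le_zero hd, coeff_iterate_derivative]
  have hm : ((X ^ 2 - 1 : ℝ[X]) ^ n).Monic := by
    apply Monic.pow
    rw [show (X ^ 2 - 1 : ℝ[X]) = X ^ 2 - C 1 by simp]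
    exact monic_X_pow_sub_C _ (by norm_num)
  have hc := hm.coeff_natDegree
  rw [lg_natDegree] at hc
  simp [hc, Nat.descFactorial_self]

lemma lg_deg (n : ℕ) : (legendre n).natDegree ≤ n := by
  unfold legendre
  refine (natDegree_C_mul_le _ _).trans ?_
  have := natDegree_iterate_derivative ((X ^ 2 - 1 : ℝ[X]) ^ n) n
  rw [lg_natDegree] at this; omega

lemma lg_orth (n : ℕ) (Q : ℝ[X]) (h : Q.natDegree < n) :
    (∫ x in (-1:ℝ)..1, Q.eval x * (legendre n).eval x) = 0 := by
  have := lg_ibp n n le_rfl Q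
  rw [iterate_derivative_eq_zero h] at this
  simp only [legendre, eval_mul, eval_C, mul_left_comm _ (1 / (2 ^ n * (n.factorial : ℝ)))]
  rw [intervalIntegral.integral_const_mul, this]
  simp

lemma lg_norm (n : ℕ) :
    (∫ x in (-1:ℝ)..1, (legendre n).eval x * (legendre n).eval x) = 2 / (2 * n + 1) := by
  have h := lg_ibp n n le_rfl (derivative^[n] ((X ^ 2 - 1 : ℝ[X]) ^ n))
  rw [lg_top] at h
  simp only [eval_C] at h
  rw [intervalIntegral.integral_const_mul] at h
  have h2 := lg_int n
  simp only [legendre, eval_mul, eval_C, mul_mul_mul_comm]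
  rw [intervalIntegral.integral_const_mul, h]
  rw [Nat.factorial_succ] at h2
  push_cast at h2
  have hn : (2 * (n : ℝ) + 1) ≠ 0 := by positivity
  have hf : (n.factorial : ℝ) ≠ 0 := by positivity
  have hs : ((-1 : ℝ) ^ n) * (-1) ^ n = 1 := by rw [← mul_pow]; simp
  set I := ∫ x in (-1:ℝ)..1, (x ^ 2 - 1) ^ n
  have h3 : (-1 : ℝ) ^ n * (((2 * n).factorial : ℝ) * I)
      = 2 * (2 ^ n * (n.factorial : ℝ)) ^ 2 / (2 * n + 1) := by
    rw [eq_div_iff hn]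
    linear_combination (-1) ^ n * h2 + 2 ^ (2 * n + 1) * (n.factorial : ℝ) ^ 2 * hs
  rw [h3]
  field_simp

lemma lg_orth_full (a b : ℕ) :
    (∫ x in (-1:ℝ)..1, (legendre a).eval x * (legendre b).eval x)
      = if a = b then 2 / (2 * (a : ℝ) + 1) else 0 := by
  split_ifs with hab
  · subst hab; exact lg_norm a
  · rcases lt_or_gt_of_ne hab with h | h
    · exact lg_orth b _ ((lg_deg a).trans_lt h)
    · rw [← lg_orth a _ ((lg_deg b).trans_lt h)]
      congr 1
      funext x
      ring

lemma lg_shift (f : ℝ → ℝ) :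
    (∫ x in (0:ℝ)..1, f (2 * x - 1)) = 2⁻¹ * ∫ x in (-1:ℝ)..1, f x := by
  rw [intervalIntegral.integral_comp_mul_sub f (by norm_num : (2:ℝ) ≠ 0)]
  norm_num

lemma lg_mean (a : ℕ) (ha : 1 ≤ a) : (∫ x in (0:ℝ)..1, (legendre a).eval (2 * x - 1)) = 0 := by
  rw [lg_shift (fun x => (legendre a).eval x)]
  have := lg_orth a 1 (by rw [natDegree_one]; omega)
  simp only [eval_one, one_mul] at this
  rw [this]; simp

lemma lg_ii (P : ℝ[X]) : IntervalIntegrable (fun x => P.eval (2 * x - 1)) volume 0 1 :=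
  (P.continuous.comp (by fun_prop)).intervalIntegrable _ _

theorem stmt7 :
    ((∫ ρ in (0:ℝ)..1, (mlp 0 ρ) ^ 2) = 1) ∧
    (∀ α : ℕ, 1 ≤ α → (∫ ρ in (0:ℝ)..1, mlp 0 ρ * mlp α ρ) = (-1) ^ (α + 1)) ∧
    (∀ α β : ℕ, 1 ≤ α → 1 ≤ β →
      (∫ ρ in (0:ℝ)..1, mlp α ρ * mlp β ρ)
        = (if α = β then (1 : ℝ) / (2 * (α : ℝ) + 1) else 0) + (-1) ^ (α + β)) := by
  refine ⟨by simp [mlp], ?_, ?_⟩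
  · intro a ha
    have ha' : a ≠ 0 := by omega
    simp only [mlp, ha', if_true, if_false, one_mul]
    rw [intervalIntegral.integral_sub (lg_ii _) (by simp), lg_mean a ha]
    simp [pow_succ]
  · intro a b ha hb
    have ha' : a ≠ 0 := by omega
    have hb' : b ≠ 0 := by omega
    simp only [mlp, ha', hb', if_false]
    have e : ∀ x : ℝ, ((legendre a).eval (2 * x - 1) - (-1) ^ a)
        * ((legendre b).eval (2 * x - 1) - (-1) ^ b)
        = (legendre a * legendre b).eval (2 * x - 1) - (-1) ^ b * (legendre a).eval (2 * x - 1)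
          - (-1) ^ a * (legendre b).eval (2 * x - 1) + (-1) ^ (a + b) := by
      intro x; rw [eval_mul]; ring
    simp only [e]
    rw [intervalIntegral.integral_add
        (((lg_ii _).sub ((lg_ii _).const_mul _)).sub ((lg_ii _).const_mul _)) (by simp),
      intervalIntegral.integral_sub ((lg_ii _).sub ((lg_ii _).const_mul _)) ((lg_ii _).const_mul _),
      intervalIntegral.integral_sub (lg_ii _) ((lg_ii _).const_mul _),
      intervalIntegral.integral_const_mul, intervalIntegral.integral_const_mul,
      lg_mean a ha, lg_mean b hb, lg_shift (fun x => (legendre a * legendre b).eval x)]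
    simp only [eval_mul]
    rw [lg_orth_full]
    split_ifs
    · simp; ring
    · simp
end

section
/- Let N ≥ 1, n ≥ 2, and let f = (f₁,…,f_{N+1}) ∈ ℝ^{N+1} with f₁ = 1, f_i ≥ 0 for i = 2,…,N+1, and Σ_{i=2}^{N+1} f_i = 1 (as for the Runge–Kutta basis, where f₂,…,f_{N+1} are the weights of an interpolatory quadrature, assumed nonnegative). Then 1 + 1/N ≤ |f|² ≤ 2, and consequently, with C_s ∈ ℝ^{(n−1)×n(N+1)} the block bidiagonal matrix whose j-th row carries f in columns (j−1)(N+1)+1,…,j(N+1) and −1 in column j(N+1)+1, every eigenvalue λ of C_sC_sᵀ satisfies 1/N ≤ λ ≤ 5. -/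
open Matrix
open scoped BigOperators

/-- The constraint matrix `C_s`: row `j` (for `j = 1,…,n-1`) carries the vector `f` in the
`j`-th block of `N+1` columns and the entry `-1` in the first column of block `j+1`.
Columns are indexed by pairs `(block, position in block)`. -/
def Cs (N n : ℕ) (f : Fin (N + 1) → ℝ) :
    Matrix (Fin (n - 1)) (Fin n × Fin (N + 1)) ℝ :=
  Matrix.of fun j q =>
    if (q.1 : ℕ) = (j : ℕ) then f q.2
    else if (q.1 : ℕ) = (j : ℕ) + 1 ∧ q.2 = 0 then -1 else 0

lemma aux_zero (N m : ℕ) (f : Fin (N + 1) → ℝ) (hf0 : f 0 = 1) (v : Fin m → ℝ)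
    (b : Fin (m + 1)) :
    ∑ j : Fin m, Cs N (m + 1) f j (b, 0) * v j
      = (Fin.snoc v 0 : Fin (m + 1) → ℝ) b - (Fin.cons 0 v : Fin (m + 1) → ℝ) b := by
  have h1 : ∀ b : Fin (m + 1), ∑ j : Fin m, (if b = j.castSucc then v j else 0)
      = (Fin.snoc v 0 : Fin (m + 1) → ℝ) b := by
    intro b
    induction b using Fin.lastCases with
    | last =>
      rw [Fin.snoc_last]
      apply Finset.sum_eq_zero
      intro j _
      rw [if_neg (Fin.castSucc_lt_last j).ne']
    | cast i => simp
  have h2 : ∀ b : Fin (m + 1), ∑ j : Fin m, (if b = j.succ then v j else 0)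
      = (Fin.cons 0 v : Fin (m + 1) → ℝ) b := by
    intro b
    induction b using Fin.cases with
    | zero =>
      rw [Fin.cons_zero]
      apply Finset.sum_eq_zero
      intro j _
      rw [if_neg (Fin.succ_ne_zero j).symm]
    | succ i => simp
  rw [← h1, ← h2, ← Finset.sum_sub_distrib]
  apply Finset.sum_congr rfl
  intro j _
  simp only [Cs, Matrix.of_apply, Fin.ext_iff, Fin.val_castSucc, Fin.val_succ, hf0]
  by_cases ha : (b : ℕ) = j
  · simp [ha]
  · by_cases hb : (b : ℕ) = j + 1 <;> simp [ha, hb]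

lemma aux_succ (N m : ℕ) (f : Fin (N + 1) → ℝ) (v : Fin m → ℝ)
    (b : Fin (m + 1)) (l : Fin N) :
    ∑ j : Fin m, Cs N (m + 1) f j (b, l.succ) * v j
      = f l.succ * (Fin.snoc v 0 : Fin (m + 1) → ℝ) b := by
  have h1 : ∑ j : Fin m, (if b = j.castSucc then v j else 0)
      = (Fin.snoc v 0 : Fin (m + 1) → ℝ) b := by
    induction b using Fin.lastCases with
    | last =>
      rw [Fin.snoc_last]
      apply Finset.sum_eq_zero
      intro j _
      rw [if_neg (Fin.castSucc_lt_last j).ne']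
    | cast i => simp
  rw [← h1, Finset.mul_sum]
  apply Finset.sum_congr rfl
  intro j _
  simp only [Cs, Matrix.of_apply, Fin.ext_iff, Fin.val_castSucc, Fin.val_succ]
  by_cases ha : (b : ℕ) = j <;> simp [ha]

lemma aux_eig (N m : ℕ) (f : Fin (N + 1) → ℝ) (hf0 : f 0 = 1) (μ : ℝ) (v : Fin m → ℝ)
    (hv : v ≠ 0)
    (h : (Cs N (m + 1) f * (Cs N (m + 1) f)ᵀ).mulVec v = μ • v) :
    ∑ l : Fin N, f l.succ ^ 2 ≤ μ ∧ μ ≤ ∑ l : Fin N, f l.succ ^ 2 + 4 := by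
  set S := ∑ l : Fin N, f l.succ ^ 2 with hS
  set A : Fin (m + 1) → ℝ := Fin.snoc v 0 with hA
  set B : Fin (m + 1) → ℝ := Fin.cons 0 v with hB
  set V : ℝ := ∑ j : Fin m, v j ^ 2 with hV
  have hA2 : ∑ b, A b ^ 2 = V := by
    rw [Fin.sum_univ_castSucc]; simp [hA, hV]
  have hB2 : ∑ b, B b ^ 2 = V := by
    rw [Fin.sum_univ_succ]; simp [hB, hV]
  have hVpos : 0 < V := by
    obtain ⟨j, hj⟩ := Function.ne_iff.mp hv
    exact Finset.sum_pos' (fun i _ => sq_nonneg _) ⟨j, Finset.mem_univ _, by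
      have : v j ≠ 0 := hj
      positivity⟩
  have key : μ * V = ∑ b, (A b - B b) ^ 2 + S * V := by
    have e1 : v ⬝ᵥ ((Cs N (m + 1) f * (Cs N (m + 1) f)ᵀ).mulVec v) = μ * V := by
      rw [h]
      simp only [dotProduct, Pi.smul_apply, smul_eq_mul, hV, Finset.mul_sum]
      exact Finset.sum_congr rfl fun j _ => by ring
    have e2 : v ⬝ᵥ ((Cs N (m + 1) f * (Cs N (m + 1) f)ᵀ).mulVec v)
        = ∑ q : Fin (m + 1) × Fin (N + 1), (∑ j : Fin m, Cs N (m + 1) f j q * v j) ^ 2 := by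
      rw [← Matrix.mulVec_mulVec, Matrix.dotProduct_mulVec, ← Matrix.mulVec_transpose]
      simp only [dotProduct, Matrix.mulVec, Matrix.transpose_apply, sq]
      rfl
    rw [← e1, e2, Fintype.sum_prod_type]
    simp only [Fin.sum_univ_succ (n := N), aux_zero N m f hf0, aux_succ]
    rw [Finset.sum_add_distrib, ← hA2, Finset.mul_sum]
    congr 1
    apply Finset.sum_congr rfl
    intro b _
    rw [hS, Finset.sum_mul]
    exact Finset.sum_congr rfl fun l _ => by ring
  have lo : 0 ≤ ∑ b, (A b - B b) ^ 2 := Finset.sum_nonneg fun _ _ => sq_nonneg _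
  have hi : ∑ b, (A b - B b) ^ 2 ≤ 4 * V := by
    calc ∑ b, (A b - B b) ^ 2 ≤ ∑ b, (2 * A b ^ 2 + 2 * B b ^ 2) :=
          Finset.sum_le_sum fun b _ => by nlinarith [sq_nonneg (A b + B b)]
      _ = 4 * V := by
          rw [Finset.sum_add_distrib, ← Finset.mul_sum, ← Finset.mul_sum, hA2, hB2]; ring
  constructor
  · exact le_of_mul_le_mul_right (by linarith) hVpos
  · exact le_of_mul_le_mul_right (by linarith) hVpos

theorem stmt13 (N n : ℕ) (hN : 1 ≤ N) (hn : 2 ≤ n)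
    (f : Fin (N + 1) → ℝ) (hf0 : f 0 = 1)
    (hfnonneg : ∀ l : Fin N, 0 ≤ f l.succ)
    (hfsum : ∑ l : Fin N, f l.succ = 1) :
    (1 + 1 / (N : ℝ) ≤ ∑ l, f l ^ 2) ∧ (∑ l, f l ^ 2) ≤ 2 ∧
    (∀ (μ : ℝ) (v : Fin (n - 1) → ℝ), v ≠ 0 →
        (Cs N n f * (Cs N n f)ᵀ).mulVec v = μ • v →
        1 / (N : ℝ) ≤ μ ∧ μ ≤ 5) := by
  have hNpos : (0 : ℝ) < N := by exact_mod_cast hN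
  have hlo : 1 / (N : ℝ) ≤ ∑ l : Fin N, f l.succ ^ 2 := by
    have := sq_sum_le_card_mul_sum_sq (s := (Finset.univ : Finset (Fin N)))
      (f := fun l => f l.succ)
    rw [hfsum] at this
    simp only [Finset.card_univ, Fintype.card_fin] at this
    rw [div_le_iff₀ hNpos]
    linarith
  have hhi : ∑ l : Fin N, f l.succ ^ 2 ≤ 1 := by
    rw [← hfsum]
    apply Finset.sum_le_sum
    intro l _
    have h1 : f l.succ ≤ 1 := by
      rw [← hfsum]
      exact Finset.single_le_sum (f := fun l : Fin N => f l.succ)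
        (fun i _ => hfnonneg i) (Finset.mem_univ l)
    nlinarith [hfnonneg l]
  have hsum : ∑ l, f l ^ 2 = 1 + ∑ l : Fin N, f l.succ ^ 2 := by
    rw [Fin.sum_univ_succ, hf0]; norm_num
  refine ⟨by linarith, by linarith, ?_⟩
  obtain ⟨m, rfl⟩ : ∃ m, n = m + 1 := ⟨n - 1, by omega⟩
  intro μ v hv h
  obtain ⟨h1, h2⟩ := aux_eig N m f hf0 μ v hv h
  exact ⟨by linarith, by linarith⟩
end
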